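/- Let X be a topological space equipped with a topological quandle structure, i.e. a continuous binary operation ∗ : X × X → X satisfying x ∗ x = x for all x, (x ∗ y) ∗ z = (x ∗ z) ∗ (y ∗ z) for all x, y, z, and such that for each x the right translation R_x : y ↦ y ∗ x is a homeomorphism of X. If X has exactly two path-connected components, then every right translation preserves each path component; that is, for all x, y ∈ X, the element x ∗ y lies in the same path component as x (and likewise x ∗⁻¹ y, the image of x under R_y⁻¹, lies in the same path component as x). In particular X is not algebraically connected. -/

import Mathlib

/-!
The translation by `y` fixes `y` and permutes the path components. A permutation of two components
that fixes one of them also fixes the other, so every point outside the component of `y` stays in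
its component. For a point `x` in the component of `y`, moving the second argument along a path from
`x` to `y` joins `x = x ∗ x` to `x ∗ y`.
-/

theorem setoid_rel_of_not_rel_of_not_rel {α : Type*} {s : Setoid α} {a b x y z : α}
    (hcover : ∀ u, s u a ∨ s u b) (hxy : ¬ s x y) (hzy : ¬ s z y) : s x z := by
  obtain ⟨c, hc⟩ : ∃ c, ∀ u, ¬ s u y → s u c := by
    rcases hcover y with hya | hyb
    · exact ⟨b, fun u huy ↦ (hcover u).resolve_left fun hua ↦ huy (s.trans hua (s.symm hya))⟩
    · exact ⟨a, fun u huy ↦ (hcover u).resolve_right fun hub ↦ huy (s.trans hub (s.symm hyb))⟩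
  exact s.trans (hc x hxy) (s.symm (hc z hzy))

section TwoPathComponents

variable {X : Type*} [TopologicalSpace X] {a b x y : X}

theorem joined_apply_of_not_joined_fixedPoint (hcover : ∀ u : X, Joined u a ∨ Joined u b)
    {f g : X → X} (hg : Continuous g) (hgf : Function.LeftInverse g f)
    (hy : Function.IsFixedPt f y) (hxy : ¬ Joined x y) : Joined x (f x) := by
  have hfxy : ¬ Joined (f x) y := fun h ↦ hxy <| by
    simpa only [hgf x, (hy.to_leftInverse hgf).eq] using h.map hg
  exact setoid_rel_of_not_rel_of_not_rel (s := pathSetoid X) hcover hxy hfxy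

theorem joined_op_of_idempotent (hcover : ∀ u : X, Joined u a ∨ Joined u b)
    {op : X → X → X} (hleft : ∀ u, Continuous (op u)) (hidem : ∀ u, op u u = u)
    {g : X → X} (hg : Continuous g) (hgop : Function.LeftInverse g (op · y)) :
    Joined x (op x y) := by
  by_cases hxy : Joined x y
  · simpa only [hidem] using hxy.map (hleft x)
  · exact joined_apply_of_not_joined_fixedPoint hcover hg hgop (hidem y) hxy

end TwoPathComponents

theorem two_path_components_not_algebraically_connected_general {X : Type*} [TopologicalSpace X]
    (op : X → X → X)
    (hleft : ∀ x : X, Continuous (op x))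
    (hidem : ∀ x : X, op x x = x)
    (R : X → X ≃ X)
    (hRsymm : ∀ y : X, Continuous (R y).symm)
    (hR : ∀ x y : X, R x y = op y x)
    (a b : X) (hab : ¬ Joined a b)
    (hcover : ∀ x : X, Joined x a ∨ Joined x b) :
    (∀ x y : X, Joined x (op x y) ∧ Joined x ((R y).symm x)) ∧
    ¬ (∀ x y : X, ∃ l : List (X × Bool),
        l.foldl (fun u p => if p.2 then op u p.1 else (R p.1).symm u) x = y) := by
  have joined_op (x y : X) : Joined x (op x y) :=
    joined_op_of_idempotent hcover hleft hidem (hRsymm y)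
      fun u ↦ (R y).symm_apply_eq.2 (hR y u).symm
  have joined_symm (x y : X) : Joined x ((R y).symm x) := by
    simpa only [← hR, Equiv.apply_symm_apply] using (joined_op ((R y).symm x) y).symm
  refine ⟨fun x y ↦ ⟨joined_op x y, joined_symm x y⟩, fun hconn ↦ hab ?_⟩
  obtain ⟨l, rfl⟩ := hconn a b
  refine List.foldlRecOn l _ (Joined.refl a) fun u hau p _ ↦ hau.trans ?_
  split_ifs
  exacts [joined_op u p.1, joined_symm u p.1]

/-- Lemma 2.1: let `X` be a topological quandle (continuous idempotent right-distributive
operation `op`, each right translation `R x : y ↦ y ∗ x` a homeomorphism). If `X` has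
exactly two path components (witnessed by `a, b` with `¬ Joined a b` and every point
joined to `a` or `b`), then every right translation (and its inverse) preserves path
components: `x ∗ y` and `x ∗⁻¹ y` are joined to `x`. In particular, `X` is not
algebraically connected. -/
theorem two_path_components_not_algebraically_connected {X : Type*} [TopologicalSpace X]
    (op : X → X → X)
    (hcont : Continuous fun p : X × X => op p.1 p.2)
    (hidem : ∀ x : X, op x x = x)
    (hdist : ∀ x y z : X, op (op x y) z = op (op x z) (op y z))
    (R : X → X ≃ₜ X)
    (hR : ∀ x y : X, R x y = op y x)
    (a b : X) (hab : ¬ Joined a b)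
    (hcover : ∀ x : X, Joined x a ∨ Joined x b) :
    (∀ x y : X, Joined x (op x y) ∧ Joined x ((R y).symm x)) ∧
    ¬ (∀ x y : X, ∃ l : List (X × Bool),
        l.foldl (fun u p => if p.2 then op u p.1 else (R p.1).symm u) x = y) :=
  two_path_components_not_algebraically_connected_general op (fun x ↦ hcont.comp (.prodMk_right x))
    hidem (fun x ↦ (R x).toEquiv) (fun y ↦ (R y).symm.continuous) hR a b hab hcover
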